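/- Let q ≥ 9 and k be integers with 2 ≤ k ≤ q + 1, let T be a tournament with minimum out-degree at least (q − 1)k − 1, let Ω be a collection of k − 1 pairwise vertex-disjoint q-cycles of T, and let P be a Hamiltonian path of the subtournament T ∖ Ω. Let F₁ and F₂ be disjoint vertex sets with V(F₁) ∪ V(F₂) = V(P) such that F₂ dominates F₁. Let Cᵢ ∈ Ω and let z be a vertex of Cᵢ that is dominated by F₁. Then: (i) if d⁺(z, Cᵢ) ≤ q − 3, then d⁺(z, F₂) ≥ 1; and (ii) if d⁺(z, Cᵢ) ≤ q − 4, then d⁺(z, F₂) ≥ 2. -/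

import Mathlib

open Set

/-- `T` is a tournament: irreflexive, and for distinct vertices exactly one
of the two possible arcs is present. -/
def IsTournament {V : Type*} (T : V → V → Prop) : Prop :=
  (∀ x, ¬ T x x) ∧ ∀ x y, x ≠ y → (T x y ↔ ¬ T y x)

/-- `c` is a directed cycle of length `q` in the digraph `T`. -/
def IsCycle {V : Type*} (T : V → V → Prop) (q : ℕ) (c : ZMod q → V) : Prop :=
  Function.Injective c ∧ ∀ i, T (c i) (c (i + 1))

/-- The cycles in the family `C` are pairwise vertex-disjoint. -/
def DisjointCycles {V : Type*} {k q : ℕ} (C : Fin k → ZMod q → V) : Prop :=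
  ∀ j j' : Fin k, j ≠ j' → Disjoint (Set.range (C j)) (Set.range (C j'))

/-- `T` contains `k` pairwise vertex-disjoint directed cycles of length `q`. -/
def HasDisjointCycles {V : Type*} (T : V → V → Prop) (k q : ℕ) : Prop :=
  ∃ C : Fin k → ZMod q → V, (∀ j, IsCycle T q (C j)) ∧ DisjointCycles C

/-- The out-degree of a vertex `v`. -/
noncomputable def outDeg {V : Type*} (T : V → V → Prop) (v : V) : ℕ :=
  {w | T v w}.ncard

/-- `d⁺(v, Y)`: the number of out-neighbours of `v` inside the set `Y`. -/
noncomputable def outDegTo {V : Type*} (T : V → V → Prop) (v : V) (Y : Set V) : ℕ :=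
  {w ∈ Y | T v w}.ncard

/-- `d⁺(X, v)`: the number of in-neighbours of `v` inside the set `X`. -/
noncomputable def inDegFrom {V : Type*} (T : V → V → Prop) (X : Set V) (v : V) : ℕ :=
  {x ∈ X | T x v}.ncard

/-- `d⁺(X, Y)`: the number of arcs from `X` to `Y`. -/
noncomputable def arcs {V : Type*} (T : V → V → Prop) (X Y : Set V) : ℕ :=
  {p : V × V | p.1 ∈ X ∧ p.2 ∈ Y ∧ T p.1 p.2}.ncard

/-- There is an `r`-matching from `X` to `Y`: `r` arcs from `X` to `Y` that
pairwise share no endpoints. -/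
def HasMatching {V : Type*} (T : V → V → Prop) (X Y : Set V) (r : ℕ) : Prop :=
  ∃ e : Fin r → V × V,
    (∀ i, (e i).1 ∈ X ∧ (e i).2 ∈ Y ∧ T (e i).1 (e i).2) ∧
    ∀ i j, i ≠ j → (e i).1 ≠ (e j).1 ∧ (e i).2 ≠ (e j).2

/-- `u` is a Hamiltonian path of the subtournament induced on `S`, written as
`P = (u_{l} … u₂ u₁)`: the vertex `u ⟨0,_⟩` is `u₁`, and each arc goes from the
higher-indexed vertex to the next lower-indexed one. -/
def IsHamPathOn {V : Type*} (T : V → V → Prop) (S : Set V) {l : ℕ}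
    (u : Fin l → V) : Prop :=
  Function.Injective u ∧ Set.range u = S ∧
    ∀ (i : ℕ) (h : i + 1 < l), T (u ⟨i + 1, h⟩) (u ⟨i, Nat.lt_of_succ_lt h⟩)

/-!
An out-neighbour of `z` lies in one of the `k - 1` cycles or in `F₂`, since `F₁` dominates `z`. The
`k - 2` cycles other than `Cᵢ` contribute at most `q` each, so
`(q - 1) * k - 1 ≤ d⁺(z, Cᵢ) + (k - 2) * q + d⁺(z, F₂)`, that is,
`2 * q ≤ d⁺(z, Cᵢ) + d⁺(z, F₂) + k + 1`. As `k ≤ q + 1`, this gives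
`q - 2 ≤ d⁺(z, Cᵢ) + d⁺(z, F₂)`, from which both parts follow.
-/

theorem IsTournament.asymm {V : Type*} {T : V → V → Prop} (hT : IsTournament T) {x y : V}
    (hxy : T x y) : ¬ T y x :=
  (hT.2 x y fun h => hT.1 y (h ▸ hxy)).mp hxy

section OutDegree

variable {V : Type*} (T : V → V → Prop) (v : V)

theorem outDegTo_union_le (X Y : Set V) :
    outDegTo T v (X ∪ Y) ≤ outDegTo T v X + outDegTo T v Y := by
  have hsep : {w ∈ X ∪ Y | T v w} = {w ∈ X | T v w} ∪ {w ∈ Y | T v w} :=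
    union_inter_distrib_right ..
  simpa only [outDegTo, hsep] using ncard_union_le _ _

theorem outDegTo_iUnion_le_sum {ι : Type*} [Fintype ι] (X : ι → Set V) :
    outDegTo T v (⋃ j, X j) ≤ ∑ j, outDegTo T v (X j) := by
  have hsep : {w ∈ ⋃ j, X j | T v w} = ⋃ j, {w ∈ X j | T v w} := iUnion_inter ..
  simpa only [outDegTo, hsep] using ncard_iUnion_le_of_fintype _

theorem outDegTo_range_le_card {ι : Type*} [Finite ι] (c : ι → V) :
    outDegTo T v (range c) ≤ Nat.card ι :=
  (ncard_le_ncard (sep_subset _ _) (finite_range c)).trans (Finite.card_range_le c)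

variable {T v}

theorem outDeg_eq_outDegTo {X : Set V} (hX : {w | T v w} ⊆ X) :
    outDeg T v = outDegTo T v X :=
  congrArg ncard (inter_eq_right.mpr hX).symm

theorem outDeg_le_of_subset_iUnion_union {ι : Type*} [Fintype ι] {X : ι → Set V} {Y : Set V}
    {q : ℕ} (i : ι) (hcover : {w | T v w} ⊆ (⋃ j, X j) ∪ Y)
    (hX : ∀ j ≠ i, outDegTo T v (X j) ≤ q) :
    outDeg T v ≤ outDegTo T v (X i) + (Fintype.card ι - 1) * q + outDegTo T v Y := by
  classical
  have hothers : ∑ j ∈ Finset.univ.erase i, outDegTo T v (X j) ≤ (Fintype.card ι - 1) * q := by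
    simpa [Finset.card_erase_of_mem] using
      Finset.sum_le_card_nsmul (Finset.univ.erase i) (fun j => outDegTo T v (X j)) q
        fun j hj => hX j (Finset.ne_of_mem_erase hj)
  calc outDeg T v = outDegTo T v ((⋃ j, X j) ∪ Y) := outDeg_eq_outDegTo hcover
    _ ≤ outDegTo T v (⋃ j, X j) + outDegTo T v Y := outDegTo_union_le T v _ Y
    _ ≤ ∑ j, outDegTo T v (X j) + outDegTo T v Y := by
      gcongr
      exact outDegTo_iUnion_le_sum T v X
    _ = outDegTo T v (X i) + ∑ j ∈ Finset.univ.erase i, outDegTo T v (X j)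
          + outDegTo T v Y := by
      rw [Finset.add_sum_erase _ (fun j => outDegTo T v (X j)) (Finset.mem_univ i)]
    _ ≤ outDegTo T v (X i) + (Fintype.card ι - 1) * q + outDegTo T v Y := by gcongr

end OutDegree

theorem stmt15_general {V : Type*} {T : V → V → Prop} {q k : ℕ} {z : V}
    (hdeg : (q - 1) * k - 1 ≤ outDeg T z)
    (X : Fin (k - 1) → Set V) (i : Fin (k - 1)) (hX : ∀ j ≠ i, outDegTo T z (X j) ≤ q)
    {F₁ F₂ : Set V} (hcover : (⋃ j, X j)ᶜ ⊆ F₁ ∪ F₂) (hF₁ : ∀ w ∈ F₁, ¬ T z w) :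
    2 * q ≤ outDegTo T z (X i) + outDegTo T z F₂ + k + 1 := by
  have hout : {w | T z w} ⊆ (⋃ j, X j) ∪ F₂ := fun w hw =>
    or_iff_not_imp_left.mpr fun hwX => (hcover hwX).resolve_left fun hwF₁ => hF₁ w hwF₁ hw
  have hle := outDeg_le_of_subset_iUnion_union i hout hX
  rw [Fintype.card_fin] at hle
  obtain ⟨m, rfl⟩ : ∃ m, k = m + 2 := ⟨k - 2, by have := i.isLt; omega⟩
  obtain rfl | ⟨p, rfl⟩ : q = 0 ∨ ∃ p, q = p + 1 := by cases q <;> simp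
  · simp
  · simp only [Nat.add_sub_cancel, Nat.add_succ_sub_one] at hdeg hle
    linarith [Nat.sub_le_iff_le_add.mp (hdeg.trans hle)]

theorem stmt15 {V : Type*} [Fintype V] (T : V → V → Prop) (hT : IsTournament T)
    (q k : ℕ) (hq : 9 ≤ q) (hk1 : 2 ≤ k) (hk2 : k ≤ q + 1)
    (hdeg : ∀ v, (q - 1) * k - 1 ≤ outDeg T v)
    (C : Fin (k - 1) → ZMod q → V) (hC : ∀ j, IsCycle T q (C j))
    (hdisj : DisjointCycles C)
    (l : ℕ) (u : Fin l → V) (hP : IsHamPathOn T ((⋃ j, Set.range (C j))ᶜ) u)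
    (F₁ F₂ : Set V) (hF : Disjoint F₁ F₂) (hFU : F₁ ∪ F₂ = Set.range u)
    (hdom : ∀ x ∈ F₂, ∀ y ∈ F₁, T x y)
    (i : Fin (k - 1)) (z : V) (hz : z ∈ Set.range (C i))
    (hzdom : ∀ x ∈ F₁, T x z) :
    (outDegTo T z (Set.range (C i)) ≤ q - 3 → 1 ≤ outDegTo T z F₂) ∧
    (outDegTo T z (Set.range (C i)) ≤ q - 4 → 2 ≤ outDegTo T z F₂) := by
  have : NeZero q := ⟨by omega⟩
  have hsum := stmt15_general (hdeg z) (fun j => range (C j)) i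
    (fun j _ => (outDegTo_range_le_card T z (C j)).trans_eq (Nat.card_zmod q))
    (hFU.trans hP.2.1).ge fun w hw => hT.asymm (hzdom w hw)
  constructor <;> intro <;> omega
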